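/- Let E be a real Banach space, let Ξ ⊆ E be a finite-dimensional linear subspace, and let M ⊆ E be a linear subspace that is infinite-dimensional (as a real vector space). Then there exists a continuous linear map π : E → E which is a projection (π ∘ π = π), whose range is exactly Ξ, and which maps M onto Ξ, i.e. π(M) = Ξ. -/

import Mathlib

/-!
Let `p` be a continuous projection onto `Ξ` and let `C` be a complement of `p(M)` in `Ξ`. As
`dim Ξ ≤ dim M`, rank-nullity gives `dim C ≤ dim (M ∩ ker p)`, so `C` embeds into `M ∩ ker p`,
and by Hahn–Banach this embedding has a continuous left inverse `g : E → C`. The perturbation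
`p + g ∘ (1 - p)` is still the identity on `Ξ`; it maps the copy of `C` inside `M ∩ ker p` onto `C`
and agrees with `p` modulo `C`, so the image of `M` contains `C` and hence `p(M) + C = Ξ`.
-/

universe u

open Module

theorem rank_le_rank_ker_of_isCompl_range {K : Type*} {V W : Type u} [DivisionRing K]
    [AddCommGroup V] [Module K V] [AddCommGroup W] [Module K W] {f : V →ₗ[K] W}
    [FiniteDimensional K f.range] {C : Submodule K W} (hC : IsCompl f.range C)
    (h : Module.rank K W ≤ Module.rank K V) :
    Module.rank K C ≤ Module.rank K f.ker := by
  have hW : Module.rank K C + Module.rank K f.range = Module.rank K W := by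
    rw [← (Submodule.quotientEquivOfIsCompl _ _ hC).rank_eq, Submodule.rank_quotient_add_rank]
  have hV : Module.rank K f.ker + Module.rank K f.range = Module.rank K V := by
    rw [add_comm, f.rank_range_add_rank_ker]
  rw [← hW, ← hV] at h
  exact (Cardinal.add_le_add_iff_of_lt_aleph0 (rank_lt_aleph0 K f.range)).mp h

section Perturbation

variable {R E : Type*} [Ring R] [AddCommGroup E] [TopologicalSpace E] [IsTopologicalAddGroup E]
  [Module R E] {Ξ : Submodule R E} {C : Submodule R Ξ}

/-- The perturbation `p + g ∘ (1 - p)` of a projection `p` onto `Ξ` by a map `g` into a submodule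
`C` of `Ξ`. Projections are encoded as maps into `Ξ` that are left inverse to the inclusion. -/
def perturbProjection (p : E →L[R] Ξ) (g : E →L[R] C) : E →L[R] Ξ :=
  p + C.subtypeL ∘L g ∘L (.id R E - Ξ.subtypeL ∘L p)

theorem perturbProjection_apply (p : E →L[R] Ξ) (g : E →L[R] C) (x : E) :
    perturbProjection p g x = p x + g (x - p x) := rfl

theorem leftInverse_perturbProjection {p : E →L[R] Ξ} (hp : Function.LeftInverse p Ξ.subtype)
    (g : E →L[R] C) : Function.LeftInverse (perturbProjection p g) Ξ.subtype := fun ξ ↦ by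
  have hpξ : p ξ = ξ := hp ξ
  simp [perturbProjection_apply, hpξ]

theorem map_sup_le_map_perturbProjection {p : E →L[R] Ξ} {g : E →L[R] C} {M : Submodule R E}
    (hg : (M ⊓ p.ker).map g.toLinearMap = ⊤) :
    M.map p.toLinearMap ⊔ C ≤ M.map (perturbProjection p g).toLinearMap := by
  have C_le : C ≤ M.map (perturbProjection p g).toLinearMap := by
    intro c hc
    obtain ⟨x, ⟨hxM, hpx : p x = 0⟩, hgx : g x = ⟨c, hc⟩⟩ :=
      hg.ge (Submodule.mem_top (x := ⟨c, hc⟩))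
    exact ⟨x, hxM, by simp [perturbProjection_apply, hpx, hgx]⟩
  refine sup_le ?_ C_le
  rintro _ ⟨m, hm, rfl⟩
  have p_eq : p m = perturbProjection p g m - g (m - p m) := by simp [perturbProjection_apply]
  exact p_eq ▸ sub_mem (Submodule.mem_map_of_mem hm) (C_le (g _).2)

end Perturbation

section SeparatingDual

variable {𝕜 E : Type*} [Field 𝕜] [TopologicalSpace 𝕜] [IsTopologicalRing 𝕜]
  [AddCommGroup E] [TopologicalSpace E] [Module 𝕜 E] [SeparatingDual 𝕜 E]

theorem exists_continuous_leftInverse_of_injective {F : Type*} [AddCommGroup F]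
    [TopologicalSpace F] [ContinuousAdd F] [Module 𝕜 F] [ContinuousSMul 𝕜 F]
    [FiniteDimensional 𝕜 F] {j : F →ₗ[𝕜] E} (hj : Function.Injective j) :
    ∃ g : E →L[𝕜] F, Function.LeftInverse g j := by
  let b := finBasis 𝕜 F
  choose φ hφ using fun i ↦ SeparatingDual.dualMap_surjective_iff.mpr hj (b.coord i)
  have φ_apply (i) (x : F) : φ i (j x) = b.repr x i := LinearMap.congr_fun (hφ i) x
  refine ⟨∑ i, (φ i).smulRight (b i), fun x ↦ ?_⟩
  simp [φ_apply, b.sum_repr]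

variable [IsTopologicalAddGroup E] [ContinuousSMul 𝕜 E]

theorem exists_continuous_leftInverse_map_eq_top {Ξ M : Submodule 𝕜 E} [FiniteDimensional 𝕜 Ξ]
    (hM : Module.rank 𝕜 Ξ ≤ Module.rank 𝕜 M) :
    ∃ p : E →L[𝕜] Ξ, Function.LeftInverse p Ξ.subtype ∧ M.map p.toLinearMap = ⊤ := by
  obtain ⟨p, hp⟩ := exists_continuous_leftInverse_of_injective Ξ.injective_subtype
  let f : M →ₗ[𝕜] Ξ := p.toLinearMap.domRestrict M
  obtain ⟨C, hC⟩ := f.range.exists_isCompl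
  obtain ⟨i, hi⟩ := rank_le_iff_exists_linearMap.mp (rank_le_rank_ker_of_isCompl_range hC hM)
  let j : C →ₗ[𝕜] E := M.subtype ∘ₗ f.ker.subtype ∘ₗ i
  have hj : Function.Injective j := M.injective_subtype.comp (f.ker.injective_subtype.comp hi)
  have j_mem (c : C) : j c ∈ M ⊓ p.ker := ⟨(i c : M).2, (i c).2⟩
  obtain ⟨g, hg⟩ := exists_continuous_leftInverse_of_injective hj
  have map_g : (M ⊓ p.ker).map g.toLinearMap = ⊤ :=
    eq_top_iff.mpr fun c _ ↦ ⟨j c, j_mem c, hg c⟩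
  have map_sup : M.map p.toLinearMap ⊔ C = ⊤ := by
    rw [← LinearMap.range_domRestrict, hC.sup_eq_top]
  exact ⟨perturbProjection p g, leftInverse_perturbProjection hp g,
    eq_top_iff.mpr (map_sup.ge.trans (map_sup_le_map_perturbProjection map_g))⟩

theorem exists_projection_onto_findim_surjective_from_infdim_general
    (Ξ M : Submodule 𝕜 E) [FiniteDimensional 𝕜 Ξ] (hM : Module.rank 𝕜 Ξ ≤ Module.rank 𝕜 M) :
    ∃ π : E →L[𝕜] E,
      (∀ x : E, π (π x) = π x) ∧
      LinearMap.range π.toLinearMap = Ξ ∧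
      Submodule.map π.toLinearMap M = Ξ := by
  obtain ⟨p, hp, hpM⟩ := exists_continuous_leftInverse_map_eq_top hM
  have range_p : p.toLinearMap.range = ⊤ := LinearMap.range_eq_top.mpr hp.surjective
  refine ⟨Ξ.subtypeL ∘L p, fun x ↦ congrArg Ξ.subtype (hp (p x)), ?_, ?_⟩
  · rw [ContinuousLinearMap.toLinearMap_comp, LinearMap.range_comp, range_p,
      Submodule.toLinearMap_subtypeL, Submodule.map_subtype_top]
  · rw [ContinuousLinearMap.toLinearMap_comp, Submodule.map_comp, hpM,
      Submodule.toLinearMap_subtypeL, Submodule.map_subtype_top]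

end SeparatingDual

/-- (Inside Proposition 2.33 of the paper.) In a Banach space, given a
finite-dimensional subspace Ξ and an infinite-dimensional subspace M, there is a
continuous linear projection onto Ξ mapping M onto Ξ. -/
theorem exists_projection_onto_findim_surjective_from_infdim
    {E : Type*} [NormedAddCommGroup E] [NormedSpace ℝ E] [CompleteSpace E]
    (Ξ M : Submodule ℝ E) [FiniteDimensional ℝ Ξ]
    (hM : ¬ FiniteDimensional ℝ M) :
    ∃ π : E →L[ℝ] E,
      (∀ x : E, π (π x) = π x) ∧
      LinearMap.range π.toLinearMap = Ξ ∧
      Submodule.map π.toLinearMap M = Ξ := by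
  have rank_Ξ_le : Module.rank ℝ Ξ ≤ Module.rank ℝ M :=
    (rank_lt_aleph0 ℝ Ξ).le.trans (not_lt.mp (rank_lt_aleph0_iff.not.mpr hM))
  exact exists_projection_onto_findim_surjective_from_infdim_general Ξ M rank_Ξ_le
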